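/- Let g be a driven system (U a metric space, not necessarily compact) with the USP. Then g has the global-input related stability property (GIRST): the encoding map E : ←U → H_X is continuous, where H_X carries the Hausdorff metric. -/

import Mathlib

open Metric Set Filter Topology Function

universe u' v'

variable {U : Type u'} {X : Type v'}

/-- `proc g u j m x = φ_ū(m+j, m, x)`: apply `g_{u m}, g_{u (m+1)}, …, g_{u (m+j-1)}`
to `x`, in that order. -/
def proc (g : U → X → X) (u : ℤ → U) : ℕ → ℤ → X → X
  | 0, _, x => x
  | j + 1, m, x => g (u (m + j)) (proc g u j m x)

/-- A solution of the driven system `g` for the input `u`. -/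
def IsSolution (g : U → X → X) (u : ℤ → U) (x : ℤ → X) : Prop :=
  ∀ n : ℤ, x (n + 1) = g (u n) (x n)

/-- The unique solution property: every input has exactly one solution. -/
def USP (g : U → X → X) : Prop :=
  ∀ u : ℤ → U, ∃! x : ℤ → X, IsSolution g u x

/-- The set of reachable states at time `n`: `X_n(ū) = ⋂_{j ≥ 1} φ_ū(n, n - j, X)`. -/
def reach (g : U → X → X) (u : ℤ → U) (n : ℤ) : Set X :=
  ⋂ j : ℕ, Set.range (proc g u (j + 1) (n - (j + 1)))

/-- The reachable set `X_U = ⋃ {X_n(ū) : n ∈ ℤ, ū ∈ U^ℤ}`. -/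
def reachSet (g : U → X → X) : Set X :=
  ⋃ u : ℤ → U, ⋃ n : ℤ, reach g u n

/-- The left-infinite part `←u^n = (…, u_{n-2}, u_{n-1})` of an input `u`;
coordinate `k : ℕ` corresponds to time `n - 1 - k` (so `0` is the most recent one). -/
def leftOf (u : ℤ → U) (n : ℤ) : ℕ → U := fun k => u (n - 1 - (k : ℤ))

/-- The right-shift map `r : (…, u_{-2}, u_{-1}) ↦ (…, u_{-3}, u_{-2})`. -/
def shift (w : ℕ → U) : ℕ → U := fun k => w (k + 1)

/-- The concatenation map `σ_v : (…, u_{-2}, u_{-1}) ↦ (…, u_{-2}, u_{-1}, v)`. -/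
def append (v : U) (w : ℕ → U) : ℕ → U := fun k => Nat.casesOn k v w

/-- `encProc g w j = φ_ū(0, -j, ·)` for any input `ū` whose left-infinite part is `w`. -/
def encProc (g : U → X → X) : (ℕ → U) → ℕ → X → X
  | _, 0, x => x
  | w, j + 1, x => g (w 0) (encProc g (shift w) j x)

/-- The encoding map `E(←u) = X_0(ū) = ⋂_{j ≥ 1} φ_ū(0, -j, X)`. -/
def enc (g : U → X → X) (w : ℕ → U) : Set X :=
  ⋂ j : ℕ, Set.range (encProc g w (j + 1))

/-- The map `g̃_v : (…, x_{-2}, x_{-1}) ↦ (…, x_{-2}, x_{-1}, g(v, x_{-1}))`. -/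
def tildeg (g : U → X → X) (v : U) (x : ℕ → X) : ℕ → X :=
  fun k => Nat.casesOn k (g v (x 0)) x

/-- The Hausdorff semi-distance `dist(A, B) = sup_{a ∈ A} inf_{b ∈ B} d(a, b)`. -/
noncomputable def semiDist [MetricSpace X] (A B : Set X) : ℝ :=
  sSup ((fun a => Metric.infDist a B) '' A)

/-!
The images of `X` under `j` steps of the system are compact, decrease with `j`, and depend upper
hemicontinuously on the input by the tube lemma; hence so does their intersection, the encoding map.
An upper hemicontinuous map with nonempty values is continuous for the Hausdorff distance wherever
its value is a singleton. By compactness, every state in `enc g w` can be continued backwards in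
time to a solution, so that uniqueness of the solution forces a singleton.
-/

section Topology

variable {α β γ ι : Type*} [TopologicalSpace α]

theorem image_iInter_of_directed_of_isCompact [Nonempty ι] [T2Space α] [TopologicalSpace β]
    [T1Space β] {f : α → β} (hf : Continuous f) {K : ι → Set α} (hdir : Directed (· ⊇ ·) K)
    (hK : ∀ i, IsCompact (K i)) : f '' ⋂ i, K i = ⋂ i, f '' K i := by
  refine (image_iInter_subset K f).antisymm fun y hy => ?_
  have hfiber : IsClosed (f ⁻¹' {y}) := isClosed_singleton.preimage hf
  have hnonempty : ∀ i, (K i ∩ f ⁻¹' {y}).Nonempty := fun i => mem_iInter.1 hy i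
  obtain ⟨x, hx⟩ := IsCompact.nonempty_iInter_of_directed_nonempty_isCompact_isClosed
    (fun i => K i ∩ f ⁻¹' {y})
    (fun i j => (hdir i j).imp fun _ h => h.imp (inter_subset_inter_left _)
      (inter_subset_inter_left _))
    hnonempty (fun i => (hK i).inter_right hfiber) fun i => (hK i).isClosed.inter hfiber
  rw [← iInter_inter] at hx
  exact ⟨x, hx⟩

theorem upperHemicontinuous_range_of_continuous [TopologicalSpace β] [CompactSpace β]
    [TopologicalSpace γ] {f : α → β → γ} (hf : Continuous fun p : α × β => f p.1 p.2) :
    UpperHemicontinuous fun a => range (f a) := by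
  refine upperHemicontinuous_iff_forall_isOpen.2 fun a V hV hrange => ?_
  have htube : ∀ᶠ a' in 𝓝 a, ∀ b ∈ univ, f a' b ∈ V :=
    isCompact_univ.eventually_forall_of_forall_eventually fun b _ =>
      hf.continuousAt.eventually_mem (hV.mem_nhds (hrange (mem_range_self b)))
  exact htube.mono fun a' h => range_subset_iff.2 fun b => h b (mem_univ b)

theorem upperHemicontinuousAt_iInter_of_directed_of_isCompact [Nonempty ι] [TopologicalSpace β]
    [T2Space β] {F : ι → α → Set β} {a : α} (hF : ∀ i, UpperHemicontinuousAt (F i) a)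
    (hdir : Directed (· ⊇ ·) fun i => F i a) (hcompact : ∀ i, IsCompact (F i a)) :
    UpperHemicontinuousAt (fun a' => ⋂ i, F i a') a := by
  refine upperHemicontinuousAt_iff_forall_isOpen.2 fun V hV hsubset => ?_
  obtain ⟨i, hi⟩ : ∃ i, F i a ⊆ V :=
    exists_subset_nhds_of_isCompact hdir hcompact fun x hx => hV.mem_nhds (hsubset hx)
  exact (upperHemicontinuousAt_iff_forall_isOpen.1 (hF i) V hV hi).mono
    fun a' h => (iInter_subset _ i).trans h

theorem tendsto_hausdorffDist_of_upperHemicontinuousAt [PseudoMetricSpace β] {F : α → Set β}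
    {a : α} {b : β} (hF : UpperHemicontinuousAt F a) (hFa : F a = {b})
    (hnonempty : ∀ᶠ a' in 𝓝 a, (F a').Nonempty) :
    Tendsto (fun a' => hausdorffDist (F a') (F a)) (𝓝 a) (𝓝 0) := by
  rw [hFa]
  refine tendsto_order.2 ⟨fun r hr => .of_forall fun _ => hr.trans_le hausdorffDist_nonneg,
    fun r hr => ?_⟩
  have hball : ∀ᶠ a' in 𝓝 a, F a' ⊆ ball b (r / 2) :=
    upperHemicontinuousAt_iff_forall_isOpen.1 hF _ isOpen_ball <| by
      simpa only [hFa, singleton_subset_iff] using mem_ball_self (half_pos hr)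
  filter_upwards [hball, hnonempty] with a' hsub ⟨c, hc⟩
  have hle : hausdorffDist (F a') {b} ≤ r / 2 := by
    refine hausdorffDist_le_of_mem_dist (half_pos hr).le
      (fun x hx => ⟨b, rfl, (mem_ball.1 (hsub hx)).le⟩) ?_
    rintro _ rfl
    exact ⟨c, hc, (mem_ball'.1 (hsub hc)).le⟩
  exact hle.trans_lt (half_lt_self hr)

end Topology

section Encoding

variable {g : U → X → X}

theorem encProc_succ' (g : U → X → X) (w : ℕ → U) (j : ℕ) (x : X) :
    encProc g w (j + 1) x = encProc g w j (g (w j) x) := by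
  induction j generalizing w with
  | zero => rfl
  | succ j ih => exact congrArg (g (w 0)) (ih (shift w))

theorem antitone_range_encProc (g : U → X → X) (w : ℕ → U) :
    Antitone fun j => range (encProc g w j) :=
  antitone_nat_of_succ_le fun j => range_subset_iff.2 fun x => ⟨g (w j) x, (encProc_succ' ..).symm⟩

theorem enc_eq_iInter_range_encProc (g : U → X → X) (w : ℕ → U) :
    enc g w = ⋂ j, range (encProc g w j) :=
  (antitone_range_encProc g w).iInter_nat_add 1

theorem range_encProc_succ (g : U → X → X) (w : ℕ → U) (j : ℕ) :
    range (encProc g w (j + 1)) = g (w 0) '' range (encProc g (shift w) j) :=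
  range_comp (g (w 0)) (encProc g (shift w) j)

theorem iterate_shift_apply (w : ℕ → U) (k i : ℕ) : shift^[k] w i = w (i + k) := by
  induction k generalizing w with
  | zero => rfl
  | succ _ ih => exact ih (shift w)

theorem leftOf_surjective (n : ℤ) : Surjective fun u : ℤ → U => leftOf u n := fun w =>
  ⟨fun m => w (n - 1 - m).toNat, by ext k; simp [leftOf]⟩

/-- `y` is a solution in negative time for the left-infinite input `w`; as in `leftOf`, the index
`k` counts steps into the past, so that `y k` is the state `k` steps ago. -/
def IsLeftSolution (g : U → X → X) (w : ℕ → U) (y : ℕ → X) : Prop :=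
  ∀ k, y k = g (w k) (y (k + 1))

theorem exists_isSolution_of_isLeftSolution {u : ℤ → U} {n : ℤ} {y : ℕ → X}
    (hy : IsLeftSolution g (leftOf u n) y) : ∃ x, IsSolution g u x ∧ x n = y 0 := by
  -- One of the two truncated differences always vanishes: up to time `n` this is `y`, and from
  -- then on it is the forward orbit of `y 0`.
  refine ⟨fun m => proc g u (m - n).toNat n (y (n - m).toNat), fun m => ?_, by simp [proc]⟩
  rcases le_or_gt n m with hm | hm
  · obtain ⟨k, rfl⟩ := Int.le.dest hm
    have hnow : (n + k - n).toNat = k := by lia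
    have hnext : (n + k + 1 - n).toNat = k + 1 := by lia
    have hpast : (n - (n + k)).toNat = 0 := by lia
    have hpast' : (n - (n + k + 1)).toNat = 0 := by lia
    simp only [hnow, hnext, hpast, hpast', proc]
  · obtain ⟨k, rfl⟩ : ∃ k : ℕ, m = n - 1 - k := ⟨(n - 1 - m).toNat, by lia⟩
    have hnow : (n - (n - 1 - k)).toNat = k + 1 := by lia
    have hnext : (n - (n - 1 - k + 1)).toNat = k := by lia
    have hfuture : (n - 1 - k - n).toNat = 0 := by lia
    have hfuture' : (n - 1 - k + 1 - n).toNat = 0 := by lia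
    simpa only [hnow, hnext, hfuture, hfuture', proc, leftOf] using hy k

variable [TopologicalSpace X]

theorem isCompact_range_encProc [CompactSpace X] (hg : ∀ v, Continuous (g v)) (w : ℕ → U) (j : ℕ) :
    IsCompact (range (encProc g w j)) := by
  induction j generalizing w with
  | zero => exact isCompact_range continuous_id
  | succ j ih => exact range_encProc_succ g w j ▸ (ih (shift w)).image (hg (w 0))

theorem continuous_encProc [TopologicalSpace U] (hg : Continuous fun p : U × X => g p.1 p.2)
    (j : ℕ) : Continuous fun p : (ℕ → U) × X => encProc g p.1 j p.2 := by
  induction j with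
  | zero => exact continuous_snd
  | succ j ih =>
    have hshift : Continuous (shift : (ℕ → U) → ℕ → U) :=
      continuous_pi fun k => continuous_apply (k + 1)
    have hpast : Continuous fun p : (ℕ → U) × X => encProc g (shift p.1) j p.2 :=
      ih.comp (hshift.prodMap continuous_id)
    exact hg.comp (((continuous_apply 0).comp continuous_fst).prodMk hpast)

variable [CompactSpace X] [T2Space X]

theorem enc_nonempty [Nonempty X] (hg : ∀ v, Continuous (g v)) (w : ℕ → U) :
    (enc g w).Nonempty := by
  rw [enc_eq_iInter_range_encProc]
  exact IsCompact.nonempty_iInter_of_directed_nonempty_isCompact_isClosed _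
    (antitone_range_encProc g w).directed_ge (fun _ => range_nonempty _)
    (isCompact_range_encProc hg w) fun j => (isCompact_range_encProc hg w j).isClosed

theorem upperHemicontinuous_enc [TopologicalSpace U]
    (hg : Continuous fun p : U × X => g p.1 p.2) : UpperHemicontinuous (enc g) := fun w => by
  simp only [funext (enc_eq_iInter_range_encProc g)]
  exact upperHemicontinuousAt_iInter_of_directed_of_isCompact
    (fun j => upperHemicontinuous_range_of_continuous (continuous_encProc hg j) w)
    (antitone_range_encProc g w).directed_ge
    (isCompact_range_encProc (fun v => hg.comp (.prodMk_right v)) w)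

theorem image_enc_shift (hg : ∀ v, Continuous (g v)) (w : ℕ → U) :
    g (w 0) '' enc g (shift w) = enc g w := by
  rw [enc_eq_iInter_range_encProc, image_iInter_of_directed_of_isCompact (hg (w 0))
    (antitone_range_encProc g _).directed_ge (isCompact_range_encProc hg _)]
  simp only [enc, range_encProc_succ]

theorem exists_isLeftSolution_of_mem_enc (hg : ∀ v, Continuous (g v)) {w : ℕ → U} {z : X}
    (hz : z ∈ enc g w) : ∃ y, IsLeftSolution g w y ∧ y 0 = z := by
  have hpre (k : ℕ) (a : enc g (shift^[k] w)) : ∃ b : enc g (shift^[k + 1] w), g (w k) b = a := by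
    obtain ⟨b, hb, hba⟩ := (image_enc_shift hg (shift^[k] w)).ge a.2
    rw [← iterate_succ_apply' shift] at hb
    rw [iterate_shift_apply, Nat.zero_add] at hba
    exact ⟨⟨b, hb⟩, hba⟩
  choose predecessor hpredecessor using hpre
  let y (k : ℕ) : enc g (shift^[k] w) := Nat.rec ⟨z, hz⟩ predecessor k
  have hy : IsLeftSolution g w fun k => (y k).1 := fun k => (hpredecessor k (y k)).symm
  exact ⟨_, hy, rfl⟩

theorem enc_leftOf_eq_singleton (hg : ∀ v, Continuous (g v)) {u : ℤ → U} {n : ℤ} {z : X}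
    (hz : ∀ x, IsSolution g u x → x n = z) : enc g (leftOf u n) = {z} := by
  have : Nonempty X := ⟨z⟩
  refine eq_singleton_iff_nonempty_unique_mem.2 ⟨enc_nonempty hg _, fun a ha => ?_⟩
  obtain ⟨y, hy, rfl⟩ := exists_isLeftSolution_of_mem_enc hg ha
  obtain ⟨x, hx, hxy⟩ := exists_isSolution_of_isLeftSolution hy
  rw [← hxy, hz x hx]

end Encoding

theorem stmt_17_general [MetricSpace X] [CompactSpace X] [TopologicalSpace U]
    {g : U → X → X} (hg : Continuous fun p : U × X => g p.1 p.2) {u : ℤ → U} {n : ℤ} {z : X}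
    (hz : ∀ x, IsSolution g u x → x n = z) :
    Tendsto (fun w : ℕ → U => hausdorffDist (enc g w) (enc g (leftOf u n)))
      (𝓝 (leftOf u n)) (𝓝 0) := by
  have hg' (v : U) : Continuous (g v) := hg.comp (.prodMk_right v)
  have : Nonempty X := ⟨z⟩
  exact tendsto_hausdorffDist_of_upperHemicontinuousAt (upperHemicontinuous_enc hg _)
    (enc_leftOf_eq_singleton hg' hz) (.of_forall (enc_nonempty hg'))

/-- if `g` has the USP (with `U` not necessarily compact), then `g` has the
GIRST: the encoding map `E : ←U → H_X` is continuous for the Hausdorff metric. -/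
theorem stmt_17 [MetricSpace X] [CompactSpace X] [MetricSpace U]
    (g : U → X → X) (hg : Continuous fun p : U × X => g p.1 p.2)
    (husp : USP g) :
    ∀ w : ℕ → U,
      Tendsto (fun w' : ℕ → U => Metric.hausdorffDist (enc g w') (enc g w))
        (𝓝 w) (𝓝 0) := by
  intro w
  obtain ⟨u, rfl⟩ := leftOf_surjective 0 w
  obtain ⟨x, -, hunique⟩ := husp u
  exact stmt_17_general hg fun x' hx' => congrFun (hunique x' hx') 0
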